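/- Under the stated hypotheses on φ, there exists a real number a > 0 such that (−t)^{1/α − N/(2 k_J)} ‖U(t)‖_{L²(ℝ^N)} → a as t → 0 from the left. -/

import Mathlib

open MeasureTheory Filter

/-- The map `z ↦ d (1+‖z‖)^K` raised to `-2/α` is integrable. -/
lemma aux_integrable (N : ℕ) (α K d : ℝ) (hα : 0 < α) (hd : 0 < d)
    (hK : (N : ℝ) * α / 2 < K) :
    Integrable (fun z : EuclideanSpace ℝ (Fin N) => (d * (1 + ‖z‖) ^ K) ^ (-2 / α)) := by
  have h : Integrable (fun z : EuclideanSpace ℝ (Fin N) => (1 + ‖z‖) ^ (-(2 * K / α))) := by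
    apply integrable_one_add_norm
    simp only [finrank_euclideanSpace, Fintype.card_fin]
    rw [lt_div_iff₀ hα]; linarith
  refine (h.const_mul (d ^ (-2 / α))).congr (Eventually.of_forall fun z => ?_)
  have h1 : 0 ≤ 1 + ‖z‖ := by positivity
  simp only
  rw [Real.mul_rpow hd.le (by positivity), ← Real.rpow_mul h1]
  congr 2
  ring

lemma aux_one_add (K u : ℝ) (hK : 0 < K) (hu : 0 ≤ u) :
    (1 + u) ^ K ≤ 2 ^ K * (1 + u ^ K) := by
  have h0 : 0 ≤ u ^ K := Real.rpow_nonneg hu _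
  have h2 : (0:ℝ) < 2 ^ K := Real.rpow_pos_of_pos two_pos _
  rcases le_total u 1 with h | h
  · calc (1 + u) ^ K ≤ 2 ^ K := Real.rpow_le_rpow (by linarith) (by linarith) hK.le
      _ ≤ 2 ^ K * (1 + u ^ K) := by nlinarith
  · calc (1 + u) ^ K ≤ (2 * u) ^ K := Real.rpow_le_rpow (by linarith) (by linarith) hK.le
      _ = 2 ^ K * u ^ K := Real.mul_rpow two_pos.le hu
      _ ≤ 2 ^ K * (1 + u ^ K) := by nlinarith

lemma aux_lower (α c K u : ℝ) (hα : 0 < α) (hc : 0 < c) (hK : 0 < K) (hu : 0 ≤ u) :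
    min α c / 2 ^ K * (1 + u) ^ K ≤ α + c * u ^ K := by
  have h0 : 0 ≤ u ^ K := Real.rpow_nonneg hu _
  have h2 : (0:ℝ) < 2 ^ K := Real.rpow_pos_of_pos two_pos _
  have hm : 0 < min α c := lt_min hα hc
  calc min α c / 2 ^ K * (1 + u) ^ K ≤ min α c / 2 ^ K * (2 ^ K * (1 + u ^ K)) := by
        gcongr; exact aux_one_add K u hK hu
    _ = min α c + min α c * u ^ K := by field_simp
    _ ≤ α + c * u ^ K := by
        gcongr
        · exact min_le_left _ _
        · exact min_le_right _ _

lemma local_lim (N : ℕ) (hN : 1 ≤ N) (α K κ r c η : ℝ) (hα : 0 < α)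
    (hK : (N : ℝ) * α / 2 < K) (hκ : 0 < κ) (hκK : κ ≤ K) (hr : 0 < r) (hr1 : r ≤ 1)
    (hc : 0 < c) (hη : 0 < η)
    (ψ : EuclideanSpace ℝ (Fin N) → ℝ) (hψ : Continuous ψ) (hψ0 : ∀ y, 0 ≤ ψ y)
    (hlow : ∀ y, ‖y‖ < r → c * ‖y‖ ^ κ ≤ ψ y)
    (hlim : Tendsto (fun y => ‖y‖ ^ (-κ) * ψ y) (nhdsWithin 0 {0}ᶜ) (nhds η)) :
    ∃ A : ℝ, 0 ≤ A ∧ (κ = K → 0 < A) ∧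
      Tendsto (fun s : ℝ => s ^ (2 / α - N / K) *
        ∫ y in Metric.ball 0 r, (α * s + ψ y) ^ (-2 / α)) (nhdsWithin 0 (Set.Ioi 0)) (nhds A) := by
  have hK0 : 0 < K := hκ.trans_le hκK
  have : Nonempty (Fin N) := ⟨⟨0, hN⟩⟩
  set d : ℝ := min α c / 2 ^ K with hd
  have hd0 : 0 < d := div_pos (lt_min hα hc) (Real.rpow_pos_of_pos two_pos _)
  have hint := aux_integrable N α K d hα hd0 hK
  have hneg : -2 / α ≤ 0 := div_nonpos_of_nonpos_of_nonneg (by norm_num) hα.le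
  -- the limit function
  set L : EuclideanSpace ℝ (Fin N) → ℝ :=
    fun z => if κ = K then (α + η * ‖z‖ ^ K) ^ (-2 / α) else 0 with hL
  set F : ℝ → EuclideanSpace ℝ (Fin N) → ℝ := fun s z =>
    (Metric.ball (0 : EuclideanSpace ℝ (Fin N)) r).indicator
      (fun y => (α + ψ y / s) ^ (-2 / α)) (s ^ (1 / K) • z) with hF
  have hFmeas : ∀ s, 0 < s → AEStronglyMeasurable (F s) volume := by
    intro s hs
    have h1 : Measurable ((Metric.ball (0 : EuclideanSpace ℝ (Fin N)) r).indicator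
      (fun y => (α + ψ y / s) ^ (-2 / α))) := by
      apply Measurable.indicator _ measurableSet_ball
      have := hψ.measurable
      fun_prop
    exact (h1.comp (measurable_const_smul (s ^ (1 / K)))).aestronglyMeasurable
  have hsK : ∀ s : ℝ, 0 < s → (s ^ (1 / K)) ^ K = s := by
    intro s hs
    rw [← Real.rpow_mul hs.le, one_div_mul_cancel hK0.ne', Real.rpow_one]
  have hnorm : ∀ s : ℝ, 0 < s → ∀ z : EuclideanSpace ℝ (Fin N),
      ‖s ^ (1 / K) • z‖ = s ^ (1 / K) * ‖z‖ := by
    intro s hs z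
    rw [norm_smul, Real.norm_of_nonneg (Real.rpow_nonneg hs.le _)]
  have hbound : ∀ s, 0 < s → ∀ z, ‖F s z‖ ≤ (d * (1 + ‖z‖) ^ K) ^ (-2 / α) := by
    intro s hs z
    have hb : 0 ≤ (d * (1 + ‖z‖) ^ K) ^ (-2 / α) := by positivity
    simp only [hF]
    by_cases hz : s ^ (1 / K) • z ∈ Metric.ball (0 : EuclideanSpace ℝ (Fin N)) r
    · rw [Set.indicator_of_mem hz]
      have hz' : ‖s ^ (1 / K) • z‖ < r := by simpa using hz
      have hpos : 0 < α + ψ (s ^ (1 / K) • z) / s :=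
        add_pos_of_pos_of_nonneg hα (div_nonneg (hψ0 _) hs.le)
      rw [Real.norm_of_nonneg (Real.rpow_nonneg hpos.le _)]
      apply Real.rpow_le_rpow_of_nonpos (by positivity) _ hneg
      refine (aux_lower α c K ‖z‖ hα hc hK0 (norm_nonneg _)).trans ?_
      gcongr
      rw [le_div_iff₀ hs]
      calc c * ‖z‖ ^ K * s = c * ‖s ^ (1 / K) • z‖ ^ K := by
            rw [hnorm s hs, Real.mul_rpow (by positivity) (norm_nonneg _), hsK s hs]; ring
        _ ≤ c * ‖s ^ (1 / K) • z‖ ^ κ := by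
            refine mul_le_mul_of_nonneg_left ?_ hc.le
            exact Real.rpow_le_rpow_of_exponent_ge_of_imp (norm_nonneg _) (hz'.le.trans hr1) hκK
              (fun _ h => absurd h hK0.ne')
        _ ≤ _ := hlow _ hz'
    · rw [Set.indicator_of_notMem hz]
      simpa using hb
  have hs0 : Tendsto (fun s : ℝ => s ^ (1 / K)) (nhdsWithin 0 (Set.Ioi 0)) (nhds 0) := by
    have h : ContinuousAt (fun s : ℝ => s ^ (1 / K)) 0 :=
      Real.continuousAt_rpow_const _ _ (Or.inr (by positivity))
    have h' := h.tendsto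
    rw [Real.zero_rpow (by positivity)] at h'
    exact h'.mono_left nhdsWithin_le_nhds
  have hpt : ∀ z : EuclideanSpace ℝ (Fin N), z ≠ 0 →
      Tendsto (fun s => F s z) (nhdsWithin 0 (Set.Ioi 0)) (nhds (L z)) := by
    intro z hz
    have hzn : 0 < ‖z‖ := norm_pos_iff.mpr hz
    have ht0 : Tendsto (fun s : ℝ => s ^ (1 / K) • z) (nhdsWithin 0 (Set.Ioi 0)) (nhds 0) := by
      simpa using hs0.smul_const z
    have ht : Tendsto (fun s : ℝ => s ^ (1 / K) • z) (nhdsWithin 0 (Set.Ioi 0))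
        (nhdsWithin 0 {0}ᶜ) := by
      refine tendsto_nhdsWithin_iff.mpr ⟨ht0, ?_⟩
      filter_upwards [self_mem_nhdsWithin] with s hs
      have : 0 < s ^ (1 / K) := Real.rpow_pos_of_pos hs _
      exact smul_ne_zero this.ne' hz
    have hq := hlim.comp ht
    have hev : ∀ᶠ s : ℝ in nhdsWithin 0 (Set.Ioi 0),
        (α + (‖s ^ (1 / K) • z‖ ^ (-κ) * ψ (s ^ (1 / K) • z)) * (‖z‖ ^ κ * s ^ (κ / K - 1)))
          ^ (-2 / α) = F s z := by
      filter_upwards [self_mem_nhdsWithin, ht0 (Metric.ball_mem_nhds 0 hr)] with s hs hs2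
      have hs : 0 < s := hs
      have hs2 : s ^ (1 / K) • z ∈ Metric.ball (0 : EuclideanSpace ℝ (Fin N)) r := hs2
      have hp : 0 < s ^ (1 / K) := Real.rpow_pos_of_pos hs _
      simp only [hF]
      rw [Set.indicator_of_mem hs2, hnorm s hs, Real.mul_rpow hp.le hzn.le]
      congr 2
      have e1 : (s ^ (1 / K)) ^ (-κ) * s ^ (κ / K - 1) = s⁻¹ := by
        rw [← Real.rpow_mul hs.le, ← Real.rpow_add hs, ← Real.rpow_neg_one]
        congr 1; ring
      have e2 : ‖z‖ ^ (-κ) * ‖z‖ ^ κ = 1 := by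
        rw [← Real.rpow_add hzn]; simp
      calc _ = ((s ^ (1 / K)) ^ (-κ) * s ^ (κ / K - 1)) * (‖z‖ ^ (-κ) * ‖z‖ ^ κ) *
              ψ (s ^ (1 / K) • z) := by ring
        _ = _ := by rw [e1, e2]; field_simp
    refine Tendsto.congr' hev ?_
    by_cases h : κ = K
    · simp only [hL, if_pos h]
      have : ∀ s : ℝ, ‖z‖ ^ κ * s ^ (κ / K - 1) = ‖z‖ ^ K := by
        intro s; rw [h, div_self hK0.ne']; simp
      simp only [this]
      have hpos : 0 < α + η * ‖z‖ ^ K := by positivity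
      exact ((hq.mul_const (‖z‖ ^ K)).const_add α).rpow_const (Or.inl hpos.ne')
    · simp only [hL, if_neg h]
      have hlt : κ / K - 1 < 0 := by
        rw [sub_neg, div_lt_one hK0]; exact lt_of_le_of_ne hκK h
      have h1 : Tendsto (fun s : ℝ => s ^ (κ / K - 1)) (nhdsWithin 0 (Set.Ioi 0)) atTop :=
        tendsto_rpow_neg_nhdsGT_zero hlt
      have h2 := hq.pos_mul_atTop hη (h1.const_mul_atTop (Real.rpow_pos_of_pos hzn κ))
      have h3 := tendsto_atTop_add_const_left _ α h2
      have h4 := (tendsto_rpow_neg_atTop (y := 2 / α) (by positivity)).comp h3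
      rw [show -2 / α = -(2 / α) by ring]
      exact h4
  have hae : ∀ᵐ z : EuclideanSpace ℝ (Fin N), z ≠ 0 := by
    have : (volume : Measure (EuclideanSpace ℝ (Fin N))) {0} = 0 := by simp
    exact measure_eq_zero_iff_ae_notMem.mp this
  have hDCT : Tendsto (fun s => ∫ z, F s z) (nhdsWithin 0 (Set.Ioi 0)) (nhds (∫ z, L z)) := by
    apply tendsto_integral_filter_of_dominated_convergence _ _ _ hint
    · filter_upwards [hae] with z hz using hpt z hz
    · filter_upwards [self_mem_nhdsWithin] with s hs using hFmeas s hs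
    · filter_upwards [self_mem_nhdsWithin] with s hs
      exact Eventually.of_forall (hbound s hs)
  refine ⟨∫ z, L z, ?_, ?_, ?_⟩
  · apply integral_nonneg
    intro z
    simp only [hL]
    split_ifs
    · simp only [Pi.zero_apply]; positivity
    · exact le_rfl
  · intro h
    simp only [hL, if_pos h]
    have hcont : Continuous (fun z : EuclideanSpace ℝ (Fin N) =>
        (α + η * ‖z‖ ^ K) ^ (-2 / α)) := by
      refine Continuous.rpow_const ?_ ?_
      · exact continuous_const.add (continuous_const.mul
          (continuous_norm.rpow_const (fun _ => Or.inr hK0.le)))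
      · intro z
        left
        positivity
    have hi : Integrable (fun z : EuclideanSpace ℝ (Fin N) =>
        (α + η * ‖z‖ ^ K) ^ (-2 / α)) := by
      have hd1 : 0 < min α η / 2 ^ K := div_pos (lt_min hα hη) (Real.rpow_pos_of_pos two_pos _)
      refine (aux_integrable N α K _ hα hd1 hK).mono' hcont.aestronglyMeasurable
        (Eventually.of_forall fun z => ?_)
      rw [Real.norm_of_nonneg (by positivity)]
      exact Real.rpow_le_rpow_of_nonpos (by positivity)
        (aux_lower α η K ‖z‖ hα hη hK0 (norm_nonneg _)) hneg
    rw [integral_pos_iff_support_of_nonneg (fun z => by simp only [Pi.zero_apply]; positivity) hi]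
    have hs : Function.support (fun z : EuclideanSpace ℝ (Fin N) =>
        (α + η * ‖z‖ ^ K) ^ (-2 / α)) = Set.univ := by
      ext z
      simp only [Function.mem_support, Set.mem_univ, iff_true]
      positivity
    rw [hs]
    simp
  · refine hDCT.congr' ?_
    filter_upwards [self_mem_nhdsWithin] with s hs
    have hs : 0 < s := hs
    have hp : 0 < s ^ (1 / K) := Real.rpow_pos_of_pos hs _
    simp only [hF]
    rw [Measure.integral_comp_smul volume ((Metric.ball (0 : EuclideanSpace ℝ (Fin N)) r).indicator
      (fun y => (α + ψ y / s) ^ (-2 / α))) (s ^ (1 / K)), integral_indicator measurableSet_ball]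
    have hRN : |((s ^ (1 / K)) ^ Module.finrank ℝ (EuclideanSpace ℝ (Fin N)))⁻¹| =
        s ^ (-(N : ℝ) / K) := by
      rw [abs_of_pos (by positivity), finrank_euclideanSpace, Fintype.card_fin,
        ← Real.rpow_natCast, ← Real.rpow_mul hs.le, ← Real.rpow_neg hs.le]
      congr 1; ring
    rw [hRN, smul_eq_mul, sub_eq_add_neg, Real.rpow_add hs, mul_comm (s ^ (2 / α)), mul_assoc,
      neg_div]
    congr 1
    rw [← integral_const_mul]
    refine integral_congr_ae (Eventually.of_forall fun y => ?_)
    simp only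
    have : α * s + ψ y = s * (α + ψ y / s) := by field_simp
    rw [this, Real.mul_rpow hs.le (add_nonneg hα.le (div_nonneg (hψ0 _) hs.le)), ← mul_assoc,
      ← Real.rpow_add hs]
    rw [show 2 / α + -2 / α = 0 by ring]
    simp

lemma far_lower (N : ℕ) (ν : ℝ) (hν : 0 < ν)
    (φ : EuclideanSpace ℝ (Fin N) → ℝ) (hφ : Continuous φ)
    (T : Set (EuclideanSpace ℝ (Fin N))) (hT : IsClosed T) (hpos : ∀ y ∈ T, 0 < φ y)
    (hφinf : ∃ c > (0 : ℝ), ∃ R : ℝ, ∀ y : EuclideanSpace ℝ (Fin N),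
      R ≤ ‖y‖ → c ≤ ‖y‖ ^ (-ν) * φ y) :
    ∃ d > (0 : ℝ), ∀ y ∈ T, d * (1 + ‖y‖) ^ ν ≤ φ y := by
  obtain ⟨c, hc, R, hR⟩ := hφinf
  have h2 : (0:ℝ) < 2 ^ ν := Real.rpow_pos_of_pos two_pos _
  have hfar : ∀ y : EuclideanSpace ℝ (Fin N), max R 1 ≤ ‖y‖ → c / 2 ^ ν * (1 + ‖y‖) ^ ν ≤ φ y := by
    intro y hy
    have hy1 : 1 ≤ ‖y‖ := (le_max_right _ _).trans hy
    have hy0 : 0 < ‖y‖ := by linarith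
    have h := hR y ((le_max_left _ _).trans hy)
    have hp : 0 < ‖y‖ ^ ν := Real.rpow_pos_of_pos hy0 _
    rw [Real.rpow_neg hy0.le, inv_mul_eq_div, le_div_iff₀ hp] at h
    calc c / 2 ^ ν * (1 + ‖y‖) ^ ν ≤ c / 2 ^ ν * (2 * ‖y‖) ^ ν := by
          gcongr; linarith
      _ = c * ‖y‖ ^ ν := by
          rw [Real.mul_rpow two_pos.le hy0.le]; field_simp
      _ ≤ φ y := h
  have hcpt : IsCompact (T ∩ Metric.closedBall 0 (max R 1)) :=
    (isCompact_closedBall _ _).inter_left hT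
  have hg : Continuous (fun y : EuclideanSpace ℝ (Fin N) => φ y / (1 + ‖y‖) ^ ν) := by
    refine hφ.div ((continuous_const.add continuous_norm).rpow_const fun _ => Or.inr hν.le) ?_
    intro y
    positivity
  obtain ⟨m, hm, hmle⟩ : ∃ m > (0:ℝ), ∀ y ∈ T ∩ Metric.closedBall 0 (max R 1),
      m ≤ φ y / (1 + ‖y‖) ^ ν := by
    rcases (T ∩ Metric.closedBall 0 (max R 1)).eq_empty_or_nonempty with h | h
    · exact ⟨1, one_pos, by simp [h]⟩
    · obtain ⟨y0, hy0, hmin⟩ := hcpt.exists_isMinOn h hg.continuousOn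
      exact ⟨_, div_pos (hpos y0 hy0.1) (by positivity), fun y hy => hmin hy⟩
  refine ⟨min m (c / 2 ^ ν), lt_min hm (by positivity), fun y hy => ?_⟩
  rcases le_total (max R 1) ‖y‖ with h | h
  · refine le_trans ?_ (hfar y h)
    gcongr
    exact min_le_right _ _
  · have h1 := hmle y ⟨hy, by simpa using h⟩
    rw [le_div_iff₀ (by positivity)] at h1
    refine le_trans ?_ h1
    gcongr
    exact min_le_left _ _

theorem U_L2_blowup_rate (N : ℕ) (hN : 1 ≤ N) (α : ℝ) (hα : 0 < α)
    (J : ℕ) (hJ : 1 ≤ J) (ρ ν : ℝ) (hρ : 0 < ρ) (hν : (N : ℝ) * α / 2 < ν)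
    (x : Fin J → EuclideanSpace ℝ (Fin N))
    (hsep : ∀ j ℓ : Fin J, j ≠ ℓ → 2 * ρ ≤ ‖x j - x ℓ‖)
    (k : Fin J → ℝ) (hkmono : Monotone k)
    (hk1 : 10 < k ⟨0, hJ⟩) (hkJ : (N : ℝ) * α / 2 < k ⟨J - 1, Nat.sub_lt hJ Nat.one_pos⟩)
    (η : Fin J → (m : ℕ) → (Fin m → Fin N) → ℝ)
    (hη : ∀ (j : Fin J) (m : ℕ) (v : Fin m → Fin N), m ≤ 3 → 0 < η j m v)
    (φ : EuclideanSpace ℝ (Fin N) → ℝ) (hφ : ContDiff ℝ 3 φ)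
    (hφpos : ∀ y : EuclideanSpace ℝ (Fin N), (∀ j : Fin J, y ≠ x j) → 0 < φ y)
    (hφloc : ∀ (j : Fin J) (m : ℕ), m ≤ 3 → ∀ v : Fin m → Fin N,
      Tendsto (fun y : EuclideanSpace ℝ (Fin N) =>
          ‖y‖ ^ (-(k j) + (m : ℝ)) *
            |iteratedFDeriv ℝ m φ (x j + y) (fun i => EuclideanSpace.single (v i) 1)|)
        (nhdsWithin 0 {0}ᶜ) (nhds (η j m v)))
    (hφinf : ∃ c > (0 : ℝ), ∃ R : ℝ, ∀ y : EuclideanSpace ℝ (Fin N),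
      R ≤ ‖y‖ → c ≤ ‖y‖ ^ (-ν) * φ y)
    (hφsup : ∀ (m : ℕ), 1 ≤ m → m ≤ 3 → ∀ v : Fin m → Fin N,
      ∃ C R : ℝ, ∀ y : EuclideanSpace ℝ (Fin N), R ≤ ‖y‖ →
        ‖y‖ ^ (-ν) * |iteratedFDeriv ℝ m φ y (fun i => EuclideanSpace.single (v i) 1)| ≤ C) :
    ∃ a > (0 : ℝ), Tendsto (fun t : ℝ =>
        (-t) ^ (1 / α - (N : ℝ) / (2 * k ⟨J - 1, Nat.sub_lt hJ Nat.one_pos⟩)) *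
        (eLpNorm (fun y : EuclideanSpace ℝ (Fin N) => (-α * t + φ y) ^ (-1 / α)) 2
          volume).toReal)
      (nhdsWithin 0 (Set.Iio 0)) (nhds a) := by
  have hα2 : -2 / α ≤ 0 := div_nonpos_of_nonpos_of_nonneg (by norm_num) hα.le
  set jJ : Fin J := ⟨J - 1, Nat.sub_lt hJ Nat.one_pos⟩ with hjJ
  set K : ℝ := k jJ with hKdef
  have hkpos : ∀ j, 0 < k j := by
    intro j
    have : k ⟨0, hJ⟩ ≤ k j := hkmono (Fin.mk_le_of_le_val (Nat.zero_le _))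
    linarith
  have hkK : ∀ j, k j ≤ K := by
    intro j
    apply hkmono
    rw [Fin.le_def]
    simp only [hjJ]
    have := j.2
    omega
  have hK0 : 0 < K := hkpos _
  have hν0 : 0 < ν := lt_of_le_of_lt (by positivity) hν
  have : Nonempty (Fin N) := ⟨⟨0, hN⟩⟩
  have hφc : Continuous φ := hφ.continuous
  -- nonnegativity
  have hφ0 : ∀ y, 0 ≤ φ y := by
    have hd : Dense ((Set.range x)ᶜ) := (Set.finite_range x).countable.dense_compl ℝ
    have hcl : IsClosed {y | 0 ≤ φ y} := isClosed_le continuous_const hφc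
    have hsub : (Set.range x)ᶜ ⊆ {y | 0 ≤ φ y} := by
      intro y hy
      refine (hφpos y fun j h => hy ⟨j, h.symm⟩).le
    intro y
    have := hcl.closure_subset_iff.mpr hsub
    exact this (hd y)
  -- local behaviour
  have hloc : ∀ j, Tendsto (fun y => ‖y‖ ^ (-(k j)) * φ (x j + y)) (nhdsWithin 0 {0}ᶜ)
      (nhds (η j 0 Fin.elim0)) := by
    intro j
    have h := hφloc j 0 (by norm_num) Fin.elim0
    simpa [abs_of_nonneg (hφ0 _)] using h
  have hη0 : ∀ j, 0 < η j 0 Fin.elim0 := fun j => hη j 0 _ (by norm_num)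
  obtain ⟨r, hr, hr1, hrρ, hlow⟩ : ∃ r : ℝ, 0 < r ∧ r ≤ 1 ∧ r ≤ ρ ∧ ∀ j y, ‖y‖ < r →
      η j 0 Fin.elim0 / 2 * ‖y‖ ^ (k j) ≤ φ (x j + y) := by
    have hev : ∀ᶠ y : EuclideanSpace ℝ (Fin N) in nhdsWithin 0 {0}ᶜ, ∀ j,
        η j 0 Fin.elim0 / 2 < ‖y‖ ^ (-(k j)) * φ (x j + y) := by
      rw [eventually_all]
      intro j
      exact (hloc j).eventually_const_lt (half_lt_self (hη0 j))
    obtain ⟨ε, hε, h⟩ := Metric.mem_nhdsWithin_iff.mp hev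
    refine ⟨min ε (min 1 ρ), lt_min hε (lt_min one_pos hρ), (min_le_right _ _).trans (min_le_left _ _),
      (min_le_right _ _).trans (min_le_right _ _), ?_⟩
    intro j y hy
    by_cases hy0 : y = 0
    · subst hy0
      rw [norm_zero, Real.zero_rpow (hkpos j).ne', mul_zero]
      exact hφ0 _
    · have hyn : 0 < ‖y‖ := norm_pos_iff.mpr hy0
      have h1 := (h ⟨by simpa using hy.trans_le (min_le_left _ _), hy0⟩ : ∀ j, _) j
      have hp : 0 < ‖y‖ ^ (k j) := Real.rpow_pos_of_pos hyn _
      rw [Real.rpow_neg hyn.le, inv_mul_eq_div, lt_div_iff₀ hp] at h1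
      exact h1.le
  -- limits on the balls
  have hballs : ∀ j, ∃ A : ℝ, 0 ≤ A ∧ (k j = K → 0 < A) ∧
      Tendsto (fun s : ℝ => s ^ (2 / α - N / K) *
        ∫ y in Metric.ball (x j) r, (α * s + φ y) ^ (-2 / α))
        (nhdsWithin 0 (Set.Ioi 0)) (nhds A) := by
    intro j
    obtain ⟨A, h1, h2, h3⟩ := local_lim N hN α K (k j) r (η j 0 Fin.elim0 / 2) (η j 0 Fin.elim0) hα
      hkJ (hkpos j) (hkK j) hr hr1 (half_pos (hη0 j)) (hη0 j) (fun y => φ (x j + y))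
      (by fun_prop) (fun y => hφ0 _) (hlow j) (hloc j)
    refine ⟨A, h1, h2, h3.congr fun s => ?_⟩
    congr 1
    rw [← integral_indicator measurableSet_ball, ← integral_indicator measurableSet_ball,
      ← integral_add_left_eq_self ((Metric.ball (x j) r).indicator _) (x j)]
    congr 1
    ext y
    simp [Set.indicator]
  choose A hA0 hApos hAlim using hballs
  set S : Set (EuclideanSpace ℝ (Fin N)) := ⋃ j, Metric.ball (x j) r with hS
  have hSo : IsOpen S := isOpen_iUnion fun j => Metric.isOpen_ball
  obtain ⟨d, hd, hdle⟩ := far_lower N ν hν0 φ hφc Sᶜ hSo.isClosed_compl (by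
    intro y hy
    apply hφpos
    intro j h
    apply hy
    rw [h]
    exact Set.mem_iUnion.mpr ⟨j, Metric.mem_ball_self hr⟩) hφinf
  have hdint := aux_integrable N α ν d hα hd hν
  have hcont : ∀ s : ℝ, 0 < s → Continuous (fun y => (α * s + φ y) ^ (-2 / α)) := by
    intro s hs
    refine (continuous_const.add hφc).rpow_const fun y => Or.inl ?_
    exact (add_pos_of_pos_of_nonneg (mul_pos hα hs) (hφ0 y)).ne'
  have hfarb : ∀ s : ℝ, 0 < s → ∀ y ∈ Sᶜ,
      (α * s + φ y) ^ (-2 / α) ≤ (d * (1 + ‖y‖) ^ ν) ^ (-2 / α) := by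
    intro s hs y hy
    apply Real.rpow_le_rpow_of_nonpos (by positivity) _ hα2
    have := hdle y hy
    have : 0 < α * s := by positivity
    linarith
  have hnn : ∀ s : ℝ, 0 < s → ∀ y, 0 ≤ (α * s + φ y) ^ (-2 / α) := by
    intro s hs y
    have := hφ0 y
    positivity
  have hintfar : ∀ s : ℝ, 0 < s → IntegrableOn (fun y => (α * s + φ y) ^ (-2 / α)) Sᶜ := by
    intro s hs
    refine hdint.integrableOn.mono' (hcont s hs).aestronglyMeasurable ?_
    filter_upwards [ae_restrict_mem hSo.measurableSet.compl] with y hy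
    rw [Real.norm_of_nonneg (hnn s hs y)]
    exact hfarb s hs y hy
  have hintball : ∀ s : ℝ, 0 < s → ∀ j,
      IntegrableOn (fun y => (α * s + φ y) ^ (-2 / α)) (Metric.ball (x j) r) := by
    intro s hs j
    exact ((hcont s hs).continuousOn.integrableOn_compact (isCompact_closedBall (x j) r)).mono_set
      Metric.ball_subset_closedBall
  have hint : ∀ s : ℝ, 0 < s → Integrable (fun y => (α * s + φ y) ^ (-2 / α)) := by
    intro s hs
    have h1 : IntegrableOn (fun y => (α * s + φ y) ^ (-2 / α)) S :=
      integrableOn_finite_iUnion.mpr (hintball s hs)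
    have := h1.union (hintfar s hs)
    rwa [Set.union_compl_self, integrableOn_univ] at this
  have hsplit : ∀ s : ℝ, 0 < s → ∫ y, (α * s + φ y) ^ (-2 / α) =
      (∑ j, ∫ y in Metric.ball (x j) r, (α * s + φ y) ^ (-2 / α)) +
        ∫ y in Sᶜ, (α * s + φ y) ^ (-2 / α) := by
    intro s hs
    rw [← integral_add_compl hSo.measurableSet (hint s hs), hS,
      integral_iUnion_fintype (fun j => measurableSet_ball) _ (hintball s hs)]
    intro j l hjl
    apply Metric.ball_disjoint_ball
    rw [dist_eq_norm]
    have := hsep j l hjl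
    linarith
  have hexp : 0 < 2 / α - N / K := by
    rw [sub_pos, div_lt_div_iff₀ hK0 hα]
    linarith
  have hsfar : Tendsto (fun s : ℝ => s ^ (2 / α - N / K) *
        ∫ y in Sᶜ, (α * s + φ y) ^ (-2 / α)) (nhdsWithin 0 (Set.Ioi 0)) (nhds 0) := by
    have hs0 : Tendsto (fun s : ℝ => s ^ (2 / α - N / K)) (nhdsWithin 0 (Set.Ioi 0)) (nhds 0) := by
      have h : ContinuousAt (fun s : ℝ => s ^ (2 / α - N / K)) 0 :=
        Real.continuousAt_rpow_const _ _ (Or.inr hexp.le)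
      have h' := h.tendsto
      rw [Real.zero_rpow hexp.ne'] at h'
      exact h'.mono_left nhdsWithin_le_nhds
    have hup := hs0.mul_const (∫ y in Sᶜ, (d * (1 + ‖y‖) ^ ν) ^ (-2 / α))
    rw [zero_mul] at hup
    refine tendsto_of_tendsto_of_tendsto_of_le_of_le' tendsto_const_nhds hup ?_ ?_
    · filter_upwards [self_mem_nhdsWithin] with s hs
      exact mul_nonneg (Real.rpow_nonneg (le_of_lt hs) _) (integral_nonneg (hnn s hs))
    · filter_upwards [self_mem_nhdsWithin] with s hs
      have hs : 0 < s := hs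
      gcongr ?_ * ?_
      exact setIntegral_mono_on (hintfar s hs) hdint.integrableOn hSo.measurableSet.compl
        (hfarb s hs)
  have htot : Tendsto (fun s : ℝ => s ^ (2 / α - N / K) * ∫ y, (α * s + φ y) ^ (-2 / α))
      (nhdsWithin 0 (Set.Ioi 0)) (nhds (∑ j, A j)) := by
    have h := (tendsto_finsetSum Finset.univ (fun j _ => hAlim j)).add hsfar
    rw [add_zero] at h
    refine h.congr' ?_
    filter_upwards [self_mem_nhdsWithin] with s hs
    rw [hsplit s hs, mul_add, Finset.mul_sum]
  have hAs : 0 < ∑ j, A j :=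
    Finset.sum_pos' (fun j _ => hA0 j) ⟨jJ, Finset.mem_univ _, hApos jJ rfl⟩
  refine ⟨√(∑ j, A j), Real.sqrt_pos.mpr hAs, ?_⟩
  have hneg : Tendsto (fun t : ℝ => -t) (nhdsWithin 0 (Set.Iio 0)) (nhdsWithin 0 (Set.Ioi 0)) := by
    refine tendsto_nhdsWithin_iff.mpr ⟨?_, ?_⟩
    · have : Tendsto (fun t : ℝ => -t) (nhds 0) (nhds 0) := by
        simpa using (continuous_neg.tendsto (0 : ℝ))
      exact this.mono_left nhdsWithin_le_nhds
    · filter_upwards [self_mem_nhdsWithin] with t ht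
      simpa using ht
  refine ((htot.comp hneg).sqrt).congr' ?_
  filter_upwards [self_mem_nhdsWithin] with t ht
  have ht : 0 < -t := by simpa using ht
  have hpos : ∀ y, 0 < -α * t + φ y := by
    intro y
    have := hφ0 y
    nlinarith [mul_pos hα ht]
  have hc1 : Continuous (fun y => (-α * t + φ y) ^ (-1 / α)) :=
    (continuous_const.add hφc).rpow_const fun y => Or.inl (hpos y).ne'
  have hsq : ∀ y, ‖(-α * t + φ y) ^ (-1 / α)‖ ^ (2 : ℝ) = (α * -t + φ y) ^ (-2 / α) := by
    intro y
    rw [Real.norm_of_nonneg (Real.rpow_nonneg (hpos y).le _), ← Real.rpow_mul (hpos y).le]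
    congr 1 <;> ring
  have hmem : MemLp (fun y => (-α * t + φ y) ^ (-1 / α)) 2 volume := by
    rw [← integrable_norm_rpow_iff hc1.aestronglyMeasurable (by norm_num) (by norm_num)]
    simp only [ENNReal.toReal_ofNat, hsq]
    exact hint _ ht
  rw [hmem.eLpNorm_eq_integral_rpow_norm (by norm_num) (by norm_num)]
  simp only [ENNReal.toReal_ofNat, hsq, Function.comp]
  have hI : 0 ≤ ∫ y, (α * -t + φ y) ^ (-2 / α) := integral_nonneg (hnn _ ht)
  rw [ENNReal.toReal_ofReal (Real.rpow_nonneg hI _), Real.sqrt_mul (Real.rpow_nonneg ht.le _),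
    Real.sqrt_eq_rpow, Real.sqrt_eq_rpow, ← Real.rpow_mul ht.le]
  congr 2
  · field_simp
  · norm_num
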